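/- Let 0 ≤ θ ≤ 1/4 and for P ≥ 2 put M = P^θ, H = P·M^{−4} and Q = P·M^{−1}. Then for every ε > 0 there exist η > 0 and C > 0 such that for all P ≥ 2 and all R with 1 ≤ R ≤ P^η one has ∫₀¹ |E₀(α)|²·|g₀(α;2Q,R)|⁴ dα ≤ C·(P·H·M²)²·Q^{1+ε}. -/

import Mathlib

open MeasureTheory
open scoped Classical

/-- `e(α) = exp(2πiα)`. -/
noncomputable def eC (α : ℝ) : ℂ := Complex.exp (2 * Real.pi * Complex.I * α)

/-- With `M = P^θ`, `H = P M⁻⁴`, the exponential sum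
`E₀(α) = ∑_{1≤h≤H} ∑_{1≤l≤2P} ∑_{M<m₁<m₂≤MR} e(8α l h³ (m₁⁸ − m₂⁸))`. -/
noncomputable def E0 (P θ R α : ℝ) : ℂ :=
  ∑ h ∈ Finset.Icc (1 : ℤ) ⌊P / (P ^ θ) ^ 4⌋,
    ∑ l ∈ Finset.Icc (1 : ℤ) ⌊2 * P⌋,
      ∑ m₂ ∈ Finset.Icc (⌊P ^ θ⌋ + 1) ⌊P ^ θ * R⌋,
        ∑ m₁ ∈ Finset.Icc (⌊P ^ θ⌋ + 1) (m₂ - 1),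
          eC (8 * α * (l : ℝ) * (h : ℝ) ^ 3 * ((m₁ : ℝ) ^ 8 - (m₂ : ℝ) ^ 8))

/-- An integer is `R`-smooth if all of its prime divisors are at most `R`. -/
def IsSmooth (R : ℝ) (x : ℤ) : Prop := ∀ p : ℕ, p.Prime → (p : ℤ) ∣ x → (p : ℝ) ≤ R

/-- The smooth quartic Weyl sum `g_δ(α; P, R) = ∑_{x ∈ 𝒜(P,R), δP < x ≤ P} e(αx⁴)`. -/
noncomputable def gW (δ P R α : ℝ) : ℂ :=
  ∑ x ∈ Finset.Icc (⌊δ * P⌋ + 1) ⌊P⌋,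
    if IsSmooth R x then eC (α * (x : ℝ) ^ 4) else 0

/-!
By Parseval, the integral counts the solutions of `φ(u) + x⁴ - y⁴ = φ(u') + x'⁴ - y'⁴`, where `φ`
runs through the phases of `E₀`. Sorting the solutions by `x - y` and applying Cauchy-Schwarz costs
a factor `O(Q)` and lets us assume `x - y = x' - y'`. The difference of the two quartic expressions
is then `(x - y) (y - y') ((x - y)² + (y - y')² + 3 (x + y')²)`, so that a nonzero value is
represented at most `4 d(n)²` times, while the value zero forces `x = y` or `y = y'` and is
represented `O(Q²)` times. In that last case `φ(u) = φ(u')`, and `u'` is determined by four divisors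
of `φ(u)`. The divisor bound `d(n) ≪ n ^ δ` and `P ≤ Q² = P H M²` conclude.
-/

open Finset
open scoped Pointwise

section DivisorBound

lemma natCast_add_one_le_mul_pow {b : ℝ} (hb : 1 < b) (k : ℕ) :
    (k : ℝ) + 1 ≤ b / (b - 1) * b ^ k := by
  have hb' : 0 < b - 1 := sub_pos.2 hb
  have bernoulli : 1 + k * (b - 1) ≤ b ^ k := one_add_mul_sub_le_pow (by linarith) k
  rw [div_mul_eq_mul_div, le_div_iff₀ hb']
  nlinarith [mul_le_mul_of_nonneg_left bernoulli (by linarith : 0 ≤ b),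
    mul_nonneg (Nat.cast_nonneg (α := ℝ) k) (sq_nonneg (b - 1))]

lemma natCast_add_one_le_pow {b : ℝ} (hb : 2 ≤ b) (k : ℕ) : (k : ℝ) + 1 ≤ b ^ k :=
  calc (k : ℝ) + 1 ≤ 2 ^ k := by exact_mod_cast Nat.lt_two_pow_self
    _ ≤ b ^ k := by gcongr

-- Small primes each cost a bounded factor, and primes `p` with `p ^ δ ≥ 2` cost nothing.
lemma natCast_add_one_le_ite_mul_rpow {δ : ℝ} (hδ : 0 < δ) {p : ℕ} (hp : 2 ≤ p) (k : ℕ) :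
    (k : ℝ) + 1 ≤ (if p < ⌈(2 : ℝ) ^ δ⁻¹⌉₊ then (2 : ℝ) ^ δ / ((2 : ℝ) ^ δ - 1) else 1) *
      ((p : ℝ) ^ k) ^ δ := by
  have hp' : (2 : ℝ) ≤ p := by exact_mod_cast hp
  have h2δ : (1 : ℝ) < 2 ^ δ := Real.one_lt_rpow one_lt_two hδ
  rw [← Real.rpow_pow_comm (Nat.cast_nonneg p)]
  split_ifs with hsmall
  · refine (natCast_add_one_le_mul_pow h2δ k).trans ?_
    have : 0 < (2 : ℝ) ^ δ - 1 := sub_pos.2 h2δ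
    gcongr
  · rw [one_mul]
    refine natCast_add_one_le_pow ?_ k
    have hlarge : (2 : ℝ) ^ δ⁻¹ ≤ p := Nat.ceil_le.1 (not_lt.1 hsmall)
    calc (2 : ℝ) = (2 ^ δ⁻¹) ^ δ := (Real.rpow_inv_rpow zero_le_two hδ.ne').symm
      _ ≤ (p : ℝ) ^ δ := by gcongr

theorem exists_card_divisors_le_mul_rpow {δ : ℝ} (hδ : 0 < δ) :
    ∃ K : ℝ, 1 ≤ K ∧ ∀ n : ℕ, (#n.divisors : ℝ) ≤ K * (n : ℝ) ^ δ := by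
  set B := ⌈(2 : ℝ) ^ δ⁻¹⌉₊
  set L : ℝ := (2 : ℝ) ^ δ / ((2 : ℝ) ^ δ - 1)
  have hL : 1 ≤ L := by
    have h2δ : (1 : ℝ) < 2 ^ δ := Real.one_lt_rpow one_lt_two hδ
    exact (one_le_div (sub_pos.2 h2δ)).2 (by linarith)
  refine ⟨L ^ B, one_le_pow₀ hL, fun n => ?_⟩
  rcases eq_or_ne n 0 with rfl | hn
  · simp [hδ.ne']
  have hfactor : ∏ p ∈ n.primeFactors, ((p : ℝ) ^ n.factorization p) ^ δ = (n : ℝ) ^ δ := by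
    have hprod : ∏ p ∈ n.primeFactors, (p : ℝ) ^ n.factorization p = n := by
      exact_mod_cast (Nat.prod_primeFactors_pow_factorization hn).symm
    rw [Real.finsetProd_rpow _ _ fun _ _ => by positivity, hprod]
  have hsmall : ∏ p ∈ n.primeFactors, (if p < B then L else 1) ≤ L ^ B := by
    rw [← prod_filter, prod_const]
    refine pow_le_pow_right₀ hL ?_
    calc #{p ∈ n.primeFactors | p < B} ≤ #(range B) :=
          card_le_card fun p hp => mem_range.2 (mem_filter.1 hp).2
      _ = B := card_range B
  calc (#n.divisors : ℝ) = ∏ p ∈ n.primeFactors, ((n.factorization p : ℝ) + 1) := by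
        rw [Nat.card_divisors hn]
        push_cast
        rfl
    _ ≤ ∏ p ∈ n.primeFactors, (if p < B then L else 1) * ((p : ℝ) ^ n.factorization p) ^ δ :=
        prod_le_prod (fun _ _ => by positivity) fun p hp =>
          natCast_add_one_le_ite_mul_rpow hδ (Nat.prime_of_mem_primeFactors hp).two_le _
    _ = (∏ p ∈ n.primeFactors, if p < B then L else 1) * (n : ℝ) ^ δ := by
        rw [prod_mul_distrib, hfactor]
    _ ≤ L ^ B * (n : ℝ) ^ δ := by gcongr

theorem exists_card_divisors_le_mul_rpow_of_le {δ c : ℝ} (hδ : 0 < δ) (hc : 1 ≤ c)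
    {k : ℕ} (hk : k ≠ 0) :
    ∃ K : ℝ, 1 ≤ K ∧ ∀ P : ℝ, 0 ≤ P → ∀ n : ℕ, (n : ℝ) ≤ c * P ^ k →
      (#n.divisors : ℝ) ≤ K * P ^ δ := by
  have hδk : 0 < δ / k := by positivity
  obtain ⟨K, hK, hdiv⟩ := exists_card_divisors_le_mul_rpow hδk
  refine ⟨K * c ^ (δ / k), one_le_mul_of_one_le_of_one_le hK (Real.one_le_rpow hc hδk.le),
    fun P hP n hn => ?_⟩
  calc (#n.divisors : ℝ) ≤ K * (n : ℝ) ^ (δ / k) := hdiv n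
    _ ≤ K * (c * P ^ k) ^ (δ / k) := by gcongr
    _ = K * c ^ (δ / k) * P ^ δ := by
        rw [Real.mul_rpow (by positivity) (by positivity), ← Real.rpow_natCast_mul hP,
          mul_div_cancel₀ δ (by positivity), mul_assoc]

lemma card_int_divisors (n : ℤ) : #n.divisors = 2 * #n.natAbs.divisors := by
  rw [Int.divisors, card_disjUnion, card_map, card_map, two_mul]

end DivisorBound

section Coincidences

variable {ι κ γ : Type*} [DecidableEq κ] [DecidableEq γ]

/-- The pairs `(i, j) ∈ s × s` with `φ i = φ j`. Their number is the mean square of the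
exponential sum over `s` with frequencies `φ` (`integral_norm_expSum_sq`). -/
def coincidences (s : Finset ι) (φ : ι → κ) : Finset (ι × ι) :=
  {p ∈ s ×ˢ s | φ p.1 = φ p.2}

lemma mem_coincidences {s : Finset ι} {φ : ι → κ} {p : ι × ι} :
    p ∈ coincidences s φ ↔ (p.1 ∈ s ∧ p.2 ∈ s) ∧ φ p.1 = φ p.2 := by
  rw [coincidences, mem_filter, mem_product]

lemma card_coincidences_eq_sum_sq {s : Finset ι} {φ : ι → κ} {t : Finset κ}
    (hφ : ∀ i ∈ s, φ i ∈ t) :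
    #(coincidences s φ) = ∑ b ∈ t, #{i ∈ s | φ i = b} ^ 2 := by
  rw [card_eq_sum_card_fiberwise (f := fun p => φ p.1) (t := t)
    fun p hp => hφ _ (mem_coincidences.1 hp).1.1]
  refine sum_congr rfl fun b _ => ?_
  rw [sq, ← card_product]
  congr 1
  ext p
  simp only [mem_filter, mem_coincidences, mem_product]
  grind

lemma card_coincidences_le_card_mul {s : Finset ι} {φ : ι → κ} {m : ℕ}
    (hm : ∀ i ∈ s, #{j ∈ s | φ j = φ i} ≤ m) : #(coincidences s φ) ≤ #s * m := by
  calc #(coincidences s φ) = ∑ i ∈ s, #{j ∈ s | φ i = φ j} := by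
        simp only [coincidences, card_filter, sum_product]
    _ ≤ #s * m := sum_le_card_nsmul _ _ _ fun i hi => by simpa only [eq_comm] using hm i hi

lemma card_coincidences_le_card_image_mul (s : Finset ι) (φ : ι → κ) (g : ι → γ) :
    #(coincidences s φ) ≤ #(s.image g) * #(coincidences s fun i => (φ i, g i)) := by
  have hφ : ∀ i ∈ s, φ i ∈ s.image φ := fun i => mem_image_of_mem φ
  have hg : ∀ i ∈ s, g i ∈ s.image g := fun i => mem_image_of_mem g
  have cauchy (b : κ) : #{i ∈ s | φ i = b} ^ 2 ≤
      #(s.image g) * ∑ c ∈ s.image g, #{i ∈ s | (φ i, g i) = (b, c)} ^ 2 := by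
    rw [card_eq_sum_card_fiberwise (f := g) (t := s.image g) fun i hi => hg i (mem_filter.1 hi).1]
    simp only [filter_filter, Prod.mk.injEq]
    exact sq_sum_le_card_mul_sum_sq
  calc #(coincidences s φ) = ∑ b ∈ s.image φ, #{i ∈ s | φ i = b} ^ 2 :=
        card_coincidences_eq_sum_sq hφ
    _ ≤ ∑ b ∈ s.image φ,
        #(s.image g) * ∑ c ∈ s.image g, #{i ∈ s | (φ i, g i) = (b, c)} ^ 2 :=
        sum_le_sum fun b _ => cauchy b
    _ = #(s.image g) * #(coincidences s fun i => (φ i, g i)) := by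
        rw [← mul_sum, ← sum_product', card_coincidences_eq_sum_sq fun i hi =>
          mem_product.2 ⟨hφ i hi, hg i hi⟩]

lemma card_coincidences_product_eq_sum {G τ : Type*} [AddCommGroup G] [DecidableEq G]
    (s : Finset ι) (t : Finset τ) (φ : ι → G) (ψ : τ → G) (g : τ → γ) :
    #(coincidences (s ×ˢ t) fun p => (φ p.1 + ψ p.2, g p.2)) =
      ∑ w ∈ s ×ˢ s, #{q ∈ coincidences t g | ψ q.1 - ψ q.2 = φ w.2 - φ w.1} := by
  have hmaps : ∀ p ∈ coincidences (s ×ˢ t) fun p => (φ p.1 + ψ p.2, g p.2),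
      (p.1.1, p.2.1) ∈ s ×ˢ s := by
    intro p hp
    simp only [mem_coincidences, mem_product] at hp ⊢
    exact ⟨hp.1.1.1, hp.1.2.1⟩
  have hiff (a b c d : G) : a + b = c + d ↔ b - d = c - a := by
    rw [sub_eq_sub_iff_add_eq_add, add_comm b]
  rw [card_eq_sum_card_fiberwise hmaps]
  refine sum_congr rfl fun w hw => ?_
  refine card_nbij' (fun p => (p.1.2, p.2.2)) (fun q => ((w.1, q.1), (w.2, q.2)))
    ?_ ?_ ?_ fun _ _ => rfl
  all_goals
    intro p hp
    simp only [coe_filter, mem_coincidences, mem_product, Prod.mk.injEq, Set.mem_ofPred_eq,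
      hiff] at hp hw ⊢
    grind

end Coincidences

section ExpSum

lemma eC_add (a b : ℝ) : eC (a + b) = eC a * eC b := by
  rw [eC, eC, eC, ← Complex.exp_add]
  push_cast
  ring_nf

lemma conj_eC (a : ℝ) : starRingEnd ℂ (eC a) = eC (-a) := by
  simp [eC, ← Complex.exp_conj, Complex.conj_ofNat]

lemma integral_eC_mul_intCast (n : ℤ) :
    ∫ α in (0 : ℝ)..1, eC (α * n) = if n = 0 then 1 else 0 := by
  split_ifs with hn
  · simp [hn, eC]
  · have hc : (2 * Real.pi * Complex.I * n : ℂ) ≠ 0 := by simp [Real.pi_ne_zero, hn]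
    have heC (α : ℝ) : eC (α * n) = Complex.exp (2 * Real.pi * Complex.I * n * α) := by
      rw [eC]
      push_cast
      ring_nf
    have hperiod : Complex.exp (2 * Real.pi * Complex.I * n) = 1 := by
      rw [mul_comm, Complex.exp_int_mul_two_pi_mul_I]
    simp [heC, integral_exp_mul_complex hc, hperiod]

/-- The exponential sum `∑ i ∈ s, e(α φ(i))` with integer frequencies `φ`. -/
noncomputable def expSum {ι : Type*} (s : Finset ι) (φ : ι → ℤ) (α : ℝ) : ℂ :=
  ∑ i ∈ s, eC (α * φ i)

variable {ι κ : Type*} (s : Finset ι) (φ : ι → ℤ) (t : Finset κ) (ψ : κ → ℤ) (α : ℝ)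

lemma conj_expSum : starRingEnd ℂ (expSum s φ α) = expSum s (fun i => -φ i) α := by
  simp [expSum, conj_eC]

lemma expSum_mul_expSum :
    expSum s φ α * expSum t ψ α = expSum (s ×ˢ t) (fun p => φ p.1 + ψ p.2) α := by
  simp [expSum, sum_mul_sum, sum_product, mul_add, eC_add]

lemma integral_expSum : ∫ α in (0 : ℝ)..1, expSum s φ α = #{i ∈ s | φ i = 0} := by
  have hint (i : ι) (_ : i ∈ s) :
      IntervalIntegrable (fun α : ℝ => eC (α * φ i)) volume 0 1 :=
    Continuous.intervalIntegrable (by unfold eC; fun_prop) _ _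
  simp only [expSum, intervalIntegral.integral_finsetSum hint, integral_eC_mul_intCast, sum_boole]

theorem integral_norm_expSum_sq :
    ∫ α in (0 : ℝ)..1, ‖expSum s φ α‖ ^ 2 = #(coincidences s φ) := by
  have hsq (α : ℝ) : ((‖expSum s φ α‖ ^ 2 : ℝ) : ℂ) =
      expSum (s ×ˢ s) (fun p => φ p.1 + -φ p.2) α := by
    rw [Complex.ofReal_pow, ← Complex.mul_conj', conj_expSum, expSum_mul_expSum]
  apply Complex.ofReal_injective
  rw [← intervalIntegral.integral_ofReal]
  simp only [hsq, integral_expSum, add_neg_eq_zero, coincidences, Complex.ofReal_natCast]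

lemma norm_expSum_sq_mul_norm_expSum_pow_four :
    ‖expSum s φ α‖ ^ 2 * ‖expSum t ψ α‖ ^ 4 =
      ‖expSum (s ×ˢ t ×ˢ t) (fun p => φ p.1 + (ψ p.2.1 - ψ p.2.2)) α‖ ^ 2 := by
  simp only [sub_eq_add_neg]
  rw [← expSum_mul_expSum s φ (t ×ˢ t) fun p => ψ p.1 + -ψ p.2,
    ← expSum_mul_expSum t ψ t fun i => -ψ i, ← conj_expSum, norm_mul, norm_mul, RCLike.norm_conj]
  ring

end ExpSum

section QuarticDifferences

lemma sub_pow_four_sub_eq_mul {S : Type*} [CommRing S] {x y x' y' : S} (h : x - y = x' - y') :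
    (x ^ 4 - y ^ 4) - (x' ^ 4 - y' ^ 4) =
      (x - y) * ((y - y') * ((x - y) ^ 2 + (y - y') ^ 2 + 3 * (x + y') ^ 2)) := by
  obtain rfl : x = y + x' - y' := by linear_combination h
  ring

/-- The representations of `n` as `(x ^ 4 - y ^ 4) - (x' ^ 4 - y' ^ 4)` with `x, y, x', y' ∈ A` and
`x - y = x' - y'`, recorded as `((x, y), (x', y'))`. They are what remains to be counted after the
Weyl differencing step `integral_norm_expSum_sq_mul_norm_quartic_pow_four_le`. -/
def quarticReps (A : Finset ℤ) (n : ℤ) : Finset ((ℤ × ℤ) × ℤ × ℤ) :=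
  {q ∈ coincidences (A ×ˢ A) fun p => p.1 - p.2 |
    (q.1.1 ^ 4 - q.1.2 ^ 4) - (q.2.1 ^ 4 - q.2.2 ^ 4) = n}

variable {A : Finset ℤ} {n x y x' y' : ℤ}

lemma mem_quarticReps :
    ((x, y), (x', y')) ∈ quarticReps A n ↔ ((x ∈ A ∧ y ∈ A) ∧ x' ∈ A ∧ y' ∈ A) ∧
      x - y = x' - y' ∧
      (x - y) * ((y - y') * ((x - y) ^ 2 + (y - y') ^ 2 + 3 * (x + y') ^ 2)) = n := by
  simp only [quarticReps, mem_filter, mem_coincidences, mem_product, and_assoc]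
  refine and_congr_right fun _ => and_congr_right fun _ => and_congr_right fun _ =>
    and_congr_right fun _ => and_congr_right fun h => ?_
  rw [sub_pow_four_sub_eq_mul h]

lemma card_quarticReps_zero_le (hA : ∀ x ∈ A, 0 < x) : #(quarticReps A 0) ≤ 2 * #A ^ 2 := by
  have hsub : quarticReps A 0 ⊆ (A ×ˢ A).image (fun p => ((p.1, p.1), (p.2, p.2))) ∪
      (A ×ˢ A).image fun p => (p, p) := by
    rintro ⟨⟨x, y⟩, x', y'⟩ hq
    obtain ⟨⟨⟨hx, hy⟩, hx', hy'⟩, hdiff, hzero⟩ := mem_quarticReps.1 hq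
    have hpos : 0 < (x - y) ^ 2 + (y - y') ^ 2 + 3 * (x + y') ^ 2 := by
      have := hA x hx
      have := hA y' hy'
      positivity
    have hcases : x - y = 0 ∨ y - y' = 0 := by
      simpa only [mul_eq_zero, hpos.ne', or_false] using hzero
    simp only [mem_union, mem_image, mem_product, Prod.mk.injEq, Prod.exists]
    rcases hcases with h | h
    · exact Or.inl ⟨x, x', ⟨hx, hx'⟩, by grind⟩
    · exact Or.inr ⟨x, y, ⟨hx, hy⟩, by grind⟩
  calc #(quarticReps A 0) ≤ #(A ×ˢ A) + #(A ×ˢ A) :=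
        (card_le_card hsub).trans <| (card_union_le _ _).trans <|
          add_le_add card_image_le card_image_le
    _ = 2 * #A ^ 2 := by
        rw [card_product]
        ring

-- The divisors `x - y` and `y - y'` of `n` determine `(x + y') ^ 2`, hence all four variables.
lemma card_quarticReps_le (hA : ∀ x ∈ A, 0 < x) (hn : n ≠ 0) :
    #(quarticReps A n) ≤ 4 * #n.natAbs.divisors ^ 2 := by
  calc #(quarticReps A n) ≤ #(n.divisors ×ˢ n.divisors) := by
        refine card_le_card_of_injOn (fun q => (q.1.1 - q.1.2, q.1.2 - q.2.2)) ?_ ?_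
        · rintro ⟨⟨x, y⟩, x', y'⟩ hq
          obtain ⟨-, -, rfl⟩ := mem_quarticReps.1 hq
          simp only [coe_product, Set.mem_prod, mem_coe, Int.mem_divisors]
          exact ⟨⟨dvd_mul_right _ _, hn⟩, (dvd_mul_right _ _).mul_left _, hn⟩
        · rintro ⟨⟨x, y⟩, x', y'⟩ hq ⟨⟨u, v⟩, u', v'⟩ hr heq
          obtain ⟨⟨⟨hx, -⟩, -, hy'⟩, hdiff, hxn⟩ := mem_quarticReps.1 hq
          obtain ⟨⟨⟨hu, -⟩, -, hv'⟩, hdiff', hun⟩ := mem_quarticReps.1 hr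
          obtain ⟨h₁, h₂⟩ : x - y = u - v ∧ y - y' = v - v' := Prod.mk.inj heq
          rw [← hxn] at hn
          have hfactor := hxn.trans hun.symm
          rw [← h₁, ← h₂] at hfactor
          have hsq : (x + y') ^ 2 = (u + v') ^ 2 := by
            have := mul_left_cancel₀ (left_ne_zero_of_mul (right_ne_zero_of_mul hn))
              (mul_left_cancel₀ (left_ne_zero_of_mul hn) hfactor)
            linarith
          have hsum : x + y' = u + v' :=
            (pow_left_inj₀ (add_pos (hA x hx) (hA y' hy')).le
              (add_pos (hA u hu) (hA v' hv')).le two_ne_zero).1 hsq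
          simp only [Prod.mk.injEq]
          omega
    _ = 4 * #n.natAbs.divisors ^ 2 := by
        rw [card_product, card_int_divisors]
        ring

lemma sum_card_quarticReps_le {ι : Type*} {U : Finset ι} {φ : ι → ℤ} {D : ℕ}
    (hA : ∀ x ∈ A, 0 < x)
    (hD : ∀ u ∈ U, ∀ v ∈ U, φ u ≠ φ v → #(φ v - φ u).natAbs.divisors ≤ D) :
    ∑ w ∈ U ×ˢ U, #(quarticReps A (φ w.2 - φ w.1)) ≤
      2 * #A ^ 2 * #(coincidences U φ) + 4 * D ^ 2 * #U ^ 2 := by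
  have hterm : ∀ w ∈ U ×ˢ U, #(quarticReps A (φ w.2 - φ w.1)) ≤
      2 * #A ^ 2 * (if φ w.1 = φ w.2 then 1 else 0) + 4 * D ^ 2 := by
    intro w hw
    obtain ⟨hu, hv⟩ := mem_product.1 hw
    split_ifs with heq
    · rw [heq, sub_self, mul_one]
      exact le_add_right (card_quarticReps_zero_le hA)
    · rw [mul_zero, zero_add]
      refine (card_quarticReps_le hA (sub_ne_zero.2 (Ne.symm heq))).trans ?_
      gcongr
      exact hD _ hu _ hv heq
  calc ∑ w ∈ U ×ˢ U, #(quarticReps A (φ w.2 - φ w.1))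
      ≤ ∑ w ∈ U ×ˢ U, (2 * #A ^ 2 * (if φ w.1 = φ w.2 then 1 else 0) + 4 * D ^ 2) :=
        sum_le_sum hterm
    _ = 2 * #A ^ 2 * #(coincidences U φ) + 4 * D ^ 2 * #U ^ 2 := by
        rw [sum_add_distrib, ← mul_sum, ← card_filter, sum_const, card_product, coincidences,
          smul_eq_mul]
        ring

end QuarticDifferences

section MeanValue

variable {ι : Type*} (U : Finset ι) (φ : ι → ℤ)

-- Weyl differencing, carried out on the underlying equation: sort its solutions by `x - y`.
theorem integral_norm_expSum_sq_mul_norm_quartic_pow_four_le (A : Finset ℤ) :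
    ∫ α in (0 : ℝ)..1, ‖expSum U φ α‖ ^ 2 * ‖expSum A (· ^ 4) α‖ ^ 4 ≤
      ((#(A - A) * ∑ w ∈ U ×ˢ U, #(quarticReps A (φ w.2 - φ w.1)) : ℕ) : ℝ) := by
  simp only [norm_expSum_sq_mul_norm_expSum_pow_four, integral_norm_expSum_sq]
  have himage : (U ×ˢ A ×ˢ A).image (fun p => p.2.1 - p.2.2) ⊆ A - A := by
    simp only [subset_iff, mem_image, mem_product]
    rintro _ ⟨p, ⟨-, hx, hy⟩, rfl⟩
    exact sub_mem_sub hx hy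
  norm_cast
  calc #(coincidences (U ×ˢ A ×ˢ A) fun p => φ p.1 + (p.2.1 ^ 4 - p.2.2 ^ 4))
      ≤ #(A - A) * #(coincidences (U ×ˢ A ×ˢ A)
          fun p => (φ p.1 + (p.2.1 ^ 4 - p.2.2 ^ 4), p.2.1 - p.2.2)) := by
        grw [card_coincidences_le_card_image_mul _ _ fun p : ι × ℤ × ℤ => p.2.1 - p.2.2, himage]
    _ = #(A - A) * ∑ w ∈ U ×ˢ U, #(quarticReps A (φ w.2 - φ w.1)) := by
        rw [card_coincidences_product_eq_sum U (A ×ˢ A) φ (fun p => p.1 ^ 4 - p.2 ^ 4)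
          fun p => p.1 - p.2]
        rfl

lemma card_sub_self_le {A : Finset ℤ} {N : ℕ} (hA : A ⊆ Icc 1 (N : ℤ)) : #(A - A) ≤ 2 * N := by
  have hsub : A - A ⊆ Icc (1 - N : ℤ) (N - 1) := by
    grw [hA]
    simp only [subset_iff, mem_sub, mem_Icc]
    rintro _ ⟨x, hx, y, hy, rfl⟩
    omega
  refine (card_le_card hsub).trans ?_
  rw [Int.card_Icc]
  omega

end MeanValue

section OcticPhase

/-- The frequency `8 l h³ (m₁⁸ - m₂⁸)` of a term of `E0`, with the variables listed in the order
`(h, l, m₂, m₁)` in which `E0` sums over them. -/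
def octicPhase (u : ℤ × ℤ × ℤ × ℤ) : ℤ :=
  8 * u.2.1 * u.1 ^ 3 * (u.2.2.2 ^ 8 - u.2.2.1 ^ 8)

/-- The tuples `(h, l, m₂, m₁)` with `1 ≤ h ≤ H`, `1 ≤ l ≤ L` and `a ≤ m₁ < m₂ ≤ b`: the shape
of the index set of `E0`, with integer endpoints. -/
noncomputable def octicIndex (H L a b : ℤ) : Finset (ℤ × ℤ × ℤ × ℤ) :=
  {u ∈ Icc 1 H ×ˢ Icc 1 L ×ˢ Icc a b ×ˢ Icc a b | u.2.2.2 < u.2.2.1}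

variable {H L a b h l m k n : ℤ}

lemma mem_octicIndex : (h, l, m, k) ∈ octicIndex H L a b ↔
    (1 ≤ h ∧ h ≤ H) ∧ (1 ≤ l ∧ l ≤ L) ∧ a ≤ k ∧ k < m ∧ m ≤ b := by
  simp only [octicIndex, mem_filter, mem_product, mem_Icc]
  omega

lemma octicPhase_neg (ha : 0 < a) {u : ℤ × ℤ × ℤ × ℤ} (hu : u ∈ octicIndex H L a b) :
    octicPhase u < 0 := by
  obtain ⟨h, l, m, k⟩ := u
  obtain ⟨⟨hh, -⟩, ⟨hl, -⟩, hk, hkm, -⟩ := mem_octicIndex.1 hu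
  have hpow : k ^ 8 < m ^ 8 := pow_lt_pow_left₀ hkm (by omega) (by norm_num)
  exact mul_neg_of_pos_of_neg (by positivity) (sub_neg.2 hpow)

lemma neg_le_octicPhase (ha : 0 < a) {u : ℤ × ℤ × ℤ × ℤ} (hu : u ∈ octicIndex H L a b) :
    -(8 * L * H ^ 3 * b ^ 8) ≤ octicPhase u := by
  obtain ⟨h, l, m, k⟩ := u
  obtain ⟨⟨hh, hH⟩, ⟨hl, hL⟩, hk, hkm, hmb⟩ := mem_octicIndex.1 hu
  have hm : 0 < m := by omega
  have hL0 : 0 ≤ L := by omega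
  have hcoef0 : 0 ≤ 8 * l * h ^ 3 := by positivity
  have hcoef : 8 * l * h ^ 3 ≤ 8 * L * H ^ 3 := by gcongr
  have hLH : 0 ≤ 8 * L * H ^ 3 := hcoef0.trans hcoef
  calc -(8 * L * H ^ 3 * b ^ 8) ≤ -(8 * l * h ^ 3 * m ^ 8) := by gcongr
    _ ≤ 8 * l * h ^ 3 * (k ^ 8 - m ^ 8) := by
        have : 0 ≤ 8 * l * h ^ 3 * k ^ 8 := by positivity
        linarith

-- `h`, `l`, `m₂ - m₁` and `m₂ + m₁` all divide the phase.
lemma card_filter_octicPhase_eq_le (ha : 0 < a) (hn : n ≠ 0) :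
    #{u ∈ octicIndex H L a b | octicPhase u = n} ≤ #n.natAbs.divisors ^ 4 := by
  set d := n.natAbs.divisors
  have hmem {j : ℤ} (hj : j ∣ n) : j.natAbs ∈ d :=
    Nat.mem_divisors.2 ⟨Int.natAbs_dvd_natAbs.2 hj, Int.natAbs_ne_zero.2 hn⟩
  calc #{u ∈ octicIndex H L a b | octicPhase u = n} ≤ #(d ×ˢ d ×ˢ d ×ˢ d) := by
        refine card_le_card_of_injOn (fun u => (u.1.natAbs, u.2.1.natAbs,
          (u.2.2.1 - u.2.2.2).natAbs, (u.2.2.1 + u.2.2.2).natAbs)) ?_ ?_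
        · rintro ⟨h, l, m, k⟩ hu
          obtain ⟨-, hphase : 8 * l * h ^ 3 * (k ^ 8 - m ^ 8) = n⟩ := mem_filter.1 hu
          simp only [coe_product, Set.mem_prod, mem_coe]
          refine ⟨hmem ⟨8 * l * h ^ 2 * (k ^ 8 - m ^ 8), ?_⟩,
            hmem ⟨8 * h ^ 3 * (k ^ 8 - m ^ 8), ?_⟩,
            hmem ⟨-8 * l * h ^ 3 * ((m + k) * (m ^ 2 + k ^ 2) * (m ^ 4 + k ^ 4)), ?_⟩,
            hmem ⟨-8 * l * h ^ 3 * ((m - k) * (m ^ 2 + k ^ 2) * (m ^ 4 + k ^ 4)), ?_⟩⟩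
          all_goals
            rw [← hphase]
            ring
        · rintro ⟨h, l, m, k⟩ hu ⟨h', l', m', k'⟩ hu' heq
          have hbox := mem_octicIndex.1 (mem_filter.1 hu).1
          have hbox' := mem_octicIndex.1 (mem_filter.1 hu').1
          simp only [Prod.mk.injEq] at heq ⊢
          omega
    _ = #d ^ 4 := by
        simp only [card_product]
        ring

lemma card_octicIndex_le (hH : 0 ≤ H) (hL : 0 ≤ L) (ha : 0 < a) (hb : 0 ≤ b) :
    (#(octicIndex H L a b) : ℤ) ≤ H * L * b ^ 2 := by
  have hIcc : (#(Icc a b) : ℤ) ≤ b := by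
    rw [Int.card_Icc]
    omega
  calc (#(octicIndex H L a b) : ℤ) ≤ #(Icc 1 H ×ˢ Icc 1 L ×ˢ Icc a b ×ˢ Icc a b) := by
        exact_mod_cast card_filter_le _ _
    _ = H * L * (#(Icc a b) : ℤ) ^ 2 := by
        simp only [card_product, Int.card_Icc, Nat.cast_mul, add_sub_cancel_right,
          Int.toNat_of_nonneg hH, Int.toNat_of_nonneg hL]
        ring
    _ ≤ H * L * b ^ 2 := by gcongr

theorem integral_octic_mul_quartic_le (ha : 0 < a) {N D : ℕ}
    (hD : ∀ n : ℕ, (n : ℤ) ≤ 8 * L * H ^ 3 * b ^ 8 → #n.divisors ≤ D)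
    {A : Finset ℤ} (hA : A ⊆ Icc 1 (N : ℤ)) :
    ∫ α in (0 : ℝ)..1,
        ‖expSum (octicIndex H L a b) octicPhase α‖ ^ 2 * ‖expSum A (· ^ 4) α‖ ^ 4 ≤
      ((2 * N * (2 * N ^ 2 * (#(octicIndex H L a b) * D ^ 4) +
        4 * D ^ 2 * #(octicIndex H L a b) ^ 2) : ℕ) : ℝ) := by
  set U := octicIndex H L a b
  have hcardA : #A ≤ N := (card_le_card hA).trans (by simp)
  have hdiff : ∀ u ∈ U, ∀ v ∈ U, octicPhase u ≠ octicPhase v →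
      #(octicPhase v - octicPhase u).natAbs.divisors ≤ D := by
    intro u hu v hv _
    refine hD _ ?_
    have := octicPhase_neg ha hu
    have := octicPhase_neg ha hv
    have := neg_le_octicPhase ha hu
    have := neg_le_octicPhase ha hv
    omega
  have hdiag : #(coincidences U octicPhase) ≤ #U * D ^ 4 := by
    refine card_coincidences_le_card_mul fun u hu => ?_
    have hneg := octicPhase_neg ha hu
    refine (card_filter_octicPhase_eq_le ha hneg.ne).trans ?_
    gcongr
    refine hD _ ?_
    have := neg_le_octicPhase ha hu
    omega
  refine (integral_norm_expSum_sq_mul_norm_quartic_pow_four_le U octicPhase A).trans ?_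
  grw [card_sub_self_le hA, sum_card_quarticReps_le (fun x hx => (mem_Icc.1 (hA hx)).1) hdiff,
    hdiag, hcardA]

end OcticPhase

section Specialisation

/-- The index set of the sum `E0 P θ R`. The strict lower bound `M < m₁` becomes
`⌊M⌋ + 1 ≤ m₁`. -/
noncomputable def E0Index (P θ R : ℝ) : Finset (ℤ × ℤ × ℤ × ℤ) :=
  octicIndex ⌊P / (P ^ θ) ^ 4⌋ ⌊2 * P⌋ (⌊P ^ θ⌋ + 1) ⌊P ^ θ * R⌋

lemma E0_eq_expSum (P θ R α : ℝ) : E0 P θ R α = expSum (E0Index P θ R) octicPhase α := by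
  simp only [E0, expSum, E0Index, octicIndex, sum_filter, sum_product]
  refine sum_congr rfl fun h _ => sum_congr rfl fun l _ => sum_congr rfl fun m hm => ?_
  have hIcc : Icc (⌊P ^ θ⌋ + 1) (m - 1) = {k ∈ Icc (⌊P ^ θ⌋ + 1) ⌊P ^ θ * R⌋ | k < m} := by
    ext k
    simp only [mem_Icc, mem_filter] at hm ⊢
    omega
  rw [hIcc, ← sum_filter]
  refine sum_congr rfl fun k _ => ?_
  congr 1
  simp only [octicPhase]
  push_cast
  ring

lemma gW_eq_expSum (δ X R α : ℝ) :
    gW δ X R α = expSum {x ∈ Icc (⌊δ * X⌋ + 1) ⌊X⌋ | IsSmooth R x} (· ^ 4) α := by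
  simp [gW, expSum, sum_filter]

variable {P θ R : ℝ}

lemma card_E0Index_le (hP : 0 < P) (hR : 0 ≤ R) :
    (#(E0Index P θ R) : ℝ) ≤ 2 * (P / P ^ θ) ^ 2 * R ^ 2 := by
  have hM : 0 < P ^ θ := Real.rpow_pos_of_pos hP θ
  have hH : 0 ≤ ⌊P / (P ^ θ) ^ 4⌋ := Int.floor_nonneg.2 (by positivity)
  have hL : 0 ≤ ⌊2 * P⌋ := Int.floor_nonneg.2 (by positivity)
  have hM' : 0 ≤ ⌊P ^ θ⌋ := Int.floor_nonneg.2 hM.le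
  have hb : 0 ≤ ⌊P ^ θ * R⌋ := Int.floor_nonneg.2 (by positivity)
  calc (#(E0Index P θ R) : ℝ)
      ≤ ⌊P / (P ^ θ) ^ 4⌋ * ⌊2 * P⌋ * (⌊P ^ θ * R⌋ : ℝ) ^ 2 := by
        exact_mod_cast card_octicIndex_le hH hL (by omega) hb
    _ ≤ P / (P ^ θ) ^ 4 * (2 * P) * (P ^ θ * R) ^ 2 := by
        gcongr <;> exact Int.floor_le _
    _ = 2 * (P / P ^ θ) ^ 2 * R ^ 2 := by field_simp

lemma floor_phase_bound_le (hP : 1 ≤ P) (hθ : 0 ≤ θ) (hR : 0 ≤ R) (hMR : P ^ θ * R ≤ P) :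
    8 * (⌊2 * P⌋ : ℝ) * (⌊P / (P ^ θ) ^ 4⌋ : ℝ) ^ 3 * (⌊P ^ θ * R⌋ : ℝ) ^ 8 ≤ 16 * P ^ 12 := by
  have hP0 : 0 < P := by linarith
  have hM : 1 ≤ P ^ θ := Real.one_le_rpow hP hθ
  have hH : (⌊P / (P ^ θ) ^ 4⌋ : ℝ) ≤ P :=
    (Int.floor_le _).trans (div_le_self hP0.le (one_le_pow₀ hM))
  have : (0 : ℝ) ≤ ⌊P / (P ^ θ) ^ 4⌋ := by exact_mod_cast Int.floor_nonneg.2 (by positivity)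
  have : (0 : ℝ) ≤ ⌊P ^ θ * R⌋ := by exact_mod_cast Int.floor_nonneg.2 (by positivity)
  calc 8 * (⌊2 * P⌋ : ℝ) * (⌊P / (P ^ θ) ^ 4⌋ : ℝ) ^ 3 * (⌊P ^ θ * R⌋ : ℝ) ^ 8
      ≤ 8 * (2 * P) * P ^ 3 * P ^ 8 := by
        gcongr
        · exact Int.floor_le _
        · exact (Int.floor_le _).trans hMR
    _ = 16 * P ^ 12 := by ring

theorem integral_E0_sq_mul_gW_pow_four_le {δ B : ℝ} (hP : 1 ≤ P) (hθ : 0 ≤ θ) (hR : 1 ≤ R)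
    (hMR : P ^ θ * R ≤ P) (hδ : 0 ≤ δ) (hB : 1 ≤ B)
    (hdiv : ∀ n : ℕ, (n : ℝ) ≤ 16 * P ^ 12 → (#n.divisors : ℝ) ≤ B) :
    ∫ α in (0 : ℝ)..1, ‖E0 P θ R α‖ ^ 2 * ‖gW δ (2 * (P / P ^ θ)) R α‖ ^ 4 ≤
      128 * (P / P ^ θ) ^ 5 * (R * B) ^ 4 := by
  have hP0 : 0 < P := by linarith
  have hM : 0 ≤ ⌊P ^ θ⌋ := Int.floor_nonneg.2 (by positivity)
  set Q := P / P ^ θ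
  have hQ : 0 ≤ Q := by positivity
  set N := ⌊2 * Q⌋₊
  set U := E0Index P θ R
  set D := ⌊B⌋₊
  have hN : (N : ℝ) ≤ 2 * Q := Nat.floor_le (by positivity)
  have hD : (D : ℝ) ≤ B := Nat.floor_le (by positivity)
  have hU : (#U : ℝ) ≤ 2 * Q ^ 2 * R ^ 2 := card_E0Index_le hP0 (by linarith)
  have hA : ({x ∈ Icc (⌊δ * (2 * Q)⌋ + 1) ⌊2 * Q⌋ | IsSmooth R x} : Finset ℤ) ⊆ Icc 1 (N : ℤ) := by
    have hδQ : 0 ≤ ⌊δ * (2 * Q)⌋ := Int.floor_nonneg.2 (by positivity)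
    rw [Int.natCast_floor_eq_floor (by positivity)]
    exact (filter_subset _ _).trans (Icc_subset_Icc_left (by omega))
  have hdivD : ∀ n : ℕ, (n : ℤ) ≤ 8 * ⌊2 * P⌋ * ⌊P / (P ^ θ) ^ 4⌋ ^ 3 * ⌊P ^ θ * R⌋ ^ 8 →
      #n.divisors ≤ D := by
    intro n hn
    refine Nat.le_floor (hdiv n (le_trans ?_ (floor_phase_bound_le hP hθ (by linarith) hMR)))
    exact_mod_cast hn
  simp only [E0_eq_expSum, gW_eq_expSum]
  refine (integral_octic_mul_quartic_le (by omega) hdivD hA).trans ?_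
  push_cast
  calc 2 * (N : ℝ) * (2 * N ^ 2 * (#U * D ^ 4) + 4 * D ^ 2 * #U ^ 2)
      ≤ 2 * (2 * Q) * (2 * (2 * Q) ^ 2 * (2 * Q ^ 2 * R ^ 2 * B ^ 4) +
          4 * B ^ 2 * (2 * Q ^ 2 * R ^ 2) ^ 2) := by gcongr
    _ = 64 * Q ^ 5 * (R ^ 2 * B ^ 4 + R ^ 4 * B ^ 2) := by ring
    _ ≤ 64 * Q ^ 5 * (R ^ 4 * B ^ 4 + R ^ 4 * B ^ 4) := by
        gcongr <;> first | assumption | norm_num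
    _ = 128 * Q ^ 5 * (R * B) ^ 4 := by ring

lemma le_div_rpow_sq (hP : 1 ≤ P) (hθ : θ ≤ 1 / 2) : P ≤ (P / P ^ θ) ^ 2 := by
  have hP0 : 0 < P := by linarith
  have hM2 : (P ^ θ) ^ 2 ≤ P :=
    calc (P ^ θ) ^ 2 = P ^ (θ * 2) := by exact_mod_cast (Real.rpow_mul_natCast hP0.le θ 2).symm
      _ ≤ P ^ (1 : ℝ) := Real.rpow_le_rpow_of_exponent_le hP (by linarith)
      _ = P := Real.rpow_one P
  rw [div_pow, le_div_iff₀ (by positivity), sq P]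
  gcongr

lemma rpow_mul_le_self {η : ℝ} (hP : 1 ≤ P) (hη : θ + η ≤ 1) (hR : R ≤ P ^ η) :
    P ^ θ * R ≤ P := by
  have hP0 : 0 < P := by linarith
  calc P ^ θ * R ≤ P ^ θ * P ^ η := by gcongr
    _ = P ^ (θ + η) := (Real.rpow_add hP0 θ η).symm
    _ ≤ P ^ (1 : ℝ) := Real.rpow_le_rpow_of_exponent_le hP hη
    _ = P := Real.rpow_one P

lemma mul_mul_rpow_pow_four_le {K ε : ℝ} (hP : 1 ≤ P) (hθ : θ ≤ 1 / 2) (hε : 0 ≤ ε) (hK : 0 ≤ K)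
    (hR0 : 0 ≤ R) (hR : R ≤ P ^ (ε / 16)) :
    (R * (K * P ^ (ε / 16))) ^ 4 ≤ K ^ 4 * (P / P ^ θ) ^ ε := by
  have hP0 : 0 ≤ P := by linarith
  calc (R * (K * P ^ (ε / 16))) ^ 4
      ≤ (P ^ (ε / 16) * (K * P ^ (ε / 16))) ^ 4 := by gcongr
    _ = K ^ 4 * (P ^ (ε / 16)) ^ 8 := by ring
    _ = K ^ 4 * P ^ (ε / 2) := by
        rw [← Real.rpow_mul_natCast hP0]
        congr 2
        push_cast
        ring
    _ ≤ K ^ 4 * ((P / P ^ θ) ^ 2) ^ (ε / 2) := by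
        gcongr
        exact le_div_rpow_sq hP hθ
    _ = K ^ 4 * (P / P ^ θ) ^ ε := by
        rw [← Real.rpow_natCast_mul (by positivity)]
        congr 2
        push_cast
        ring

end Specialisation

theorem stmt18 (θ : ℝ) (hθ0 : 0 ≤ θ) (hθ1 : θ ≤ 1 / 4) :
    ∀ ε > (0 : ℝ), ∃ η > (0 : ℝ), ∃ C > (0 : ℝ),
      ∀ P : ℝ, 2 ≤ P → ∀ R : ℝ, 1 ≤ R → R ≤ P ^ η →
        (∫ α in (0:ℝ)..1, ‖E0 P θ R α‖ ^ 2 * ‖gW 0 (2 * (P / P ^ θ)) R α‖ ^ 4)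
          ≤ C * (P * (P / (P ^ θ) ^ 4) * (P ^ θ) ^ 2) ^ 2 * (P / P ^ θ) ^ ((1 : ℝ) + ε) := by
  intro ε hε
  obtain ⟨K, hK, hdiv⟩ := exists_card_divisors_le_mul_rpow_of_le (δ := ε / 16) (c := 16)
    (by positivity) (by norm_num) (k := 12) (by norm_num)
  refine ⟨min (3 / 4) (ε / 16), by positivity, 128 * K ^ 4, by positivity,
    fun P hP R hR1 hR => ?_⟩
  have hP1 : 1 ≤ P := by linarith
  have hQ : 0 < P / P ^ θ := by positivity
  have hη : min (3 / 4) (ε / 16) ≤ 3 / 4 := min_le_left _ _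
  have hMR : P ^ θ * R ≤ P := rpow_mul_le_self hP1 (by linarith) hR
  have hRε : R ≤ P ^ (ε / 16) :=
    hR.trans (Real.rpow_le_rpow_of_exponent_le hP1 (min_le_right _ _))
  have hB : 1 ≤ K * P ^ (ε / 16) :=
    one_le_mul_of_one_le_of_one_le hK (Real.one_le_rpow hP1 (by positivity))
  calc _ ≤ 128 * (P / P ^ θ) ^ 5 * (R * (K * P ^ (ε / 16))) ^ 4 :=
        integral_E0_sq_mul_gW_pow_four_le hP1 hθ0 hR1 hMR le_rfl hB (hdiv P (by positivity))
    _ ≤ 128 * (P / P ^ θ) ^ 5 * (K ^ 4 * (P / P ^ θ) ^ ε) := by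
        gcongr
        exact mul_mul_rpow_pow_four_le hP1 (by linarith) hε.le (by linarith) (by linarith) hRε
    _ = 128 * K ^ 4 * (P * (P / (P ^ θ) ^ 4) * (P ^ θ) ^ 2) ^ 2 *
          (P / P ^ θ) ^ ((1 : ℝ) + ε) := by
        rw [Real.rpow_add hQ, Real.rpow_one]
        field_simp
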